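/- Let N be a function assigning a rational number to every finite tuple of positive integers having exactly zero or exactly two odd coordinates. Suppose that: (i) for every r ≥ 1, N(2, …, 2) = 2^{r−1}(r−1)! for the constant tuple with r entries equal to 2; (ii) N is invariant under permuting the coordinates of its argument; (iii) for every r-tuple a of positive even integers, with ã := (a₁+2, a₂, …, a_r), one has (a₁+1)(a₁+2)·E(a)·N(a) = ⌊ã₁/2⌋·⌊(ã₁−1)/2⌋·V(ã)·N(ã); (iv) for every (r+1)-tuple a of positive integers with a_{r+1} ≥ 2 that is either all even or has exactly two odd coordinates one of which is a_{r+1}, with ã := (a₁+1, a₂, …, a_r, a_{r+1}−1), one has (a₁+1)·⌊a_{r+1}/2⌋·N(a) = ⌊ã₁/2⌋·(ã_{r+1}+1)·N(ã); and (v) for every (r+1)-tuple a = (a₁, …, a_r, 1) with exactly two odd coordinates, with ã := (a₁+1, a₂, …, a_r), one has (a₁+1)·N(a) = ⌊ã₁/2⌋·V(ã)·N(ã). Then N(a) = T(a) for every such tuple a, where T is the Tutte slicings value. In particular these identities, the initial condition, and exchangeability uniquely determine the numbers of bipartite and quasibipartite plane maps with prescribed face degrees, yielding Tutte's formula of slicings.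 -/

import Mathlib

/-- `α(x) = x! / (⌊x/2⌋! ⌊(x−1)/2⌋!)`, viewed as a rational number. -/
def alphaQ (x : ℕ) : ℚ :=
  (Nat.factorial x : ℚ) /
    ((Nat.factorial (x / 2) : ℚ) * (Nat.factorial ((x - 1) / 2) : ℚ))

/-- `E(a) = (1/2) ∑ᵢ aᵢ`, the number of edges of a map of type `a`. -/
def Ev (a : List ℕ) : ℕ := a.sum / 2

/-- `V(a) = E(a) − n + 2`, the number of vertices of a map of type `a`. -/
def Vv (a : List ℕ) : ℕ := Ev a + 2 - a.length

/-- Tutte's slicings value `T(a) = ((E(a)−1)! / V(a)!) · ∏ᵢ α(aᵢ)`. -/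
def Tv (a : List ℕ) : ℚ :=
  (Nat.factorial (Ev a - 1) : ℚ) / (Nat.factorial (Vv a) : ℚ) * (a.map alphaQ).prod

/-- A tuple of positive integers having exactly zero or exactly two odd
coordinates (a bipartite or quasibipartite type). -/
def ValidType (a : List ℕ) : Prop :=
  (∀ x ∈ a, 0 < x) ∧
    (a.countP (fun x => x % 2 = 1) = 0 ∨ a.countP (fun x => x % 2 = 1) = 2)

/-!
The recurrences reduce every type to a constant one `(2, …, 2)`: recurrence (iii) lowers an even
coordinate greater than `2` by `2`, while (iv) and (v) make a type with two odd coordinates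
bipartite by moving one unit between them, dropping a coordinate that becomes `0`. All coefficients
met on the way are nonzero, so two solutions agree; and `T` is a solution because
`α(x + 1) ⌊(x + 1)/2⌋ = (x + 1) α(x)`.
-/

theorem alphaQ_succ_mul {x : ℕ} (hx : 0 < x) :
    alphaQ (x + 1) * (((x + 1) / 2 : ℕ) : ℚ) = ((x : ℚ) + 1) * alphaQ x := by
  obtain ⟨y, rfl⟩ := Nat.exists_eq_add_of_lt hx
  have hhalf : (y + 1 + 1) / 2 = y / 2 + 1 := by omega
  simp only [alphaQ, zero_add, Nat.add_sub_cancel, hhalf, Nat.factorial_succ (y + 1),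
    Nat.factorial_succ (y / 2)]
  push_cast
  field_simp

theorem alphaQ_add_two_mul {x : ℕ} (hx : 0 < x) :
    alphaQ (x + 2) * (((x + 2) / 2 : ℕ) : ℚ) * (((x + 1) / 2 : ℕ) : ℚ) =
      ((x : ℚ) + 1) * ((x : ℚ) + 2) * alphaQ x := by
  have hsucc := alphaQ_succ_mul hx
  have hsucc' := alphaQ_succ_mul x.succ_pos
  push_cast [Nat.succ_eq_add_one] at hsucc hsucc' ⊢
  linear_combination (((x + 1) / 2 : ℕ) : ℚ) * hsucc' + ((x : ℚ) + 2) * hsucc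

section Counting

variable {a : List ℕ}

theorem two_mul_length_le_sum_add_countP_odd (ha : ∀ x ∈ a, 0 < x) :
    2 * a.length ≤ a.sum + a.countP (fun x => x % 2 = 1) := by
  induction a with
  | nil => simp
  | cons x a ih =>
    obtain ⟨hx, ha⟩ := List.forall_mem_cons.mp ha
    have := ih ha
    simp only [List.sum_cons, List.length_cons, List.countP_cons, decide_eq_true_eq]
    split <;> omega

theorem ValidType.length_le_Ev_add_one (ha : ValidType a) : a.length ≤ Ev a + 1 := by
  have := two_mul_length_le_sum_add_countP_odd ha.1
  have := ha.2
  unfold Ev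
  omega

theorem ValidType.Vv_pos (ha : ValidType a) : 0 < Vv a := by
  have := ha.length_le_Ev_add_one
  unfold Vv
  omega

theorem ValidType.Ev_pos (ha : ValidType a) (hne : a ≠ []) : 0 < Ev a := by
  have := two_mul_length_le_sum_add_countP_odd ha.1
  have := List.length_pos_iff.mpr hne
  have := List.countP_le_length (p := fun x => decide (x % 2 = 1)) (l := a)
  have := ha.2
  unfold Ev
  omega

theorem exists_perm_odd_cons {m : ℕ} (ha : a.countP (fun x => x % 2 = 1) = m + 1) :
    ∃ x l, Odd x ∧ a.Perm (x :: l) ∧ l.countP (fun x => x % 2 = 1) = m := by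
  obtain ⟨x, hx, hodd⟩ := List.countP_pos_iff.mp (m.succ_pos.trans_eq ha.symm)
  refine ⟨x, a.erase x, Nat.odd_iff.mpr (of_decide_eq_true hodd), List.perm_cons_erase hx, ?_⟩
  rw [List.countP_erase, ha, if_pos ⟨hx, hodd⟩, Nat.add_sub_cancel]

end Counting

/-- The degree sequences of bipartite maps: all coordinates are positive and even. -/
def IsBipartiteType (a : List ℕ) : Prop := ∀ x ∈ a, 0 < x ∧ Even x

namespace IsBipartiteType

variable {a b : List ℕ} {x : ℕ}

theorem countP_odd_eq_zero (ha : IsBipartiteType a) : a.countP (fun x => x % 2 = 1) = 0 := by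
  simpa [List.countP_eq_zero, Nat.even_iff] using fun x hx ↦ (ha x hx).2

theorem validType (ha : IsBipartiteType a) : ValidType a :=
  ⟨fun x hx ↦ (ha x hx).1, .inl ha.countP_odd_eq_zero⟩

theorem of_countP_odd_eq_zero (hpos : ∀ x ∈ a, 0 < x)
    (ha : a.countP (fun x => x % 2 = 1) = 0) : IsBipartiteType a :=
  fun x hx ↦ ⟨hpos x hx, by simpa [Nat.even_iff] using List.countP_eq_zero.mp ha x hx⟩

theorem cons (hpos : 0 < x) (hx : Even x) (ha : IsBipartiteType a) : IsBipartiteType (x :: a) :=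
  List.forall_mem_cons.mpr ⟨⟨hpos, hx⟩, ha⟩

theorem append (ha : IsBipartiteType a) (hb : IsBipartiteType b) : IsBipartiteType (a ++ b) :=
  List.forall_mem_append.mpr ⟨ha, hb⟩

theorem perm_induction {P : List ℕ → Prop} (twos : ∀ r, P (List.replicate r 2))
    (grow : ∀ x l, IsBipartiteType (x :: l) → P (x :: l) → P ((x + 2) :: l))
    (perm : ∀ a b, IsBipartiteType a → a.Perm b → P b → P a) {a : List ℕ}
    (ha : IsBipartiteType a) : P a := by
  by_cases htwos : ∀ x ∈ a, x = 2
  · exact List.eq_replicate_of_mem htwos ▸ twos a.length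
  push Not at htwos
  obtain ⟨y, hy, hy2⟩ := htwos
  obtain ⟨hpos, heven⟩ := ha y hy
  obtain ⟨x, rfl⟩ : ∃ x, y = x + 2 := ⟨y - 2, by grind⟩
  have hperm := List.perm_cons_erase hy
  have hsmaller : IsBipartiteType (x :: a.erase (x + 2)) :=
    cons (by omega) (by grind) fun z hz ↦ ha z (List.mem_of_mem_erase hz)
  exact perm _ _ ha hperm (grow x _ hsmaller (perm_induction twos grow perm hsmaller))
termination_by a.sum
decreasing_by
  rw [hperm.sum_eq, List.sum_cons, List.sum_cons]
  omega

end IsBipartiteType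

theorem exists_perm_odd_cons_append_odd {a : List ℕ} (hpos : ∀ x ∈ a, 0 < x)
    (ha : a.countP (fun x => x % 2 = 1) = 2) :
    ∃ x y mid, Odd x ∧ Odd y ∧ IsBipartiteType mid ∧ a.Perm (x :: (mid ++ [y])) := by
  obtain ⟨x, l, hx, hperm, hl⟩ := exists_perm_odd_cons ha
  obtain ⟨y, mid, hy, hperm', hmid⟩ := exists_perm_odd_cons hl
  have hends : a.Perm (x :: (mid ++ [y])) :=
    hperm.trans ((hperm'.trans (List.perm_append_singleton y mid).symm).cons x)
  refine ⟨x, y, mid, hx, hy, .of_countP_odd_eq_zero (fun z hz ↦ hpos z ?_) hmid, hends⟩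
  exact hends.mem_iff.mpr (by simp [hz])

theorem countP_odd_cons_append_odd {x y : ℕ} {mid : List ℕ} (hx : Odd x) (hy : Odd y)
    (hmid : IsBipartiteType mid) :
    (x :: (mid ++ [y])).countP (fun x => x % 2 = 1) = 2 := by
  simp [hmid.countP_odd_eq_zero, Nat.odd_iff.mp hx, Nat.odd_iff.mp hy]

/-- The initial condition, exchangeability and the recurrences (iii)–(v), with values in an
arbitrary semiring. The field `transfer` is the case of (iv) with two odd coordinates. -/
structure SlicingsRecurrence {R : Type*} [Semiring R] (N : List ℕ → R) : Prop where
  init : ∀ r : ℕ, 1 ≤ r → N (List.replicate r 2) = 2 ^ (r - 1) * (Nat.factorial (r - 1) : R)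
  perm : ∀ a b : List ℕ, ValidType a → a.Perm b → N a = N b
  grow : ∀ (a₁ : ℕ) (rest : List ℕ),
    (∀ x ∈ a₁ :: rest, 0 < x) → (∀ x ∈ a₁ :: rest, Even x) →
    ((a₁ : R) + 1) * ((a₁ : R) + 2) * (Ev (a₁ :: rest) : R) * N (a₁ :: rest) =
      (((a₁ + 2) / 2 : ℕ) : R) * (((a₁ + 2 - 1) / 2 : ℕ) : R) *
        (Vv ((a₁ + 2) :: rest) : R) * N ((a₁ + 2) :: rest)
  transfer : ∀ (a₁ alast : ℕ) (mid : List ℕ),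
    (∀ x ∈ a₁ :: (mid ++ [alast]), 0 < x) → 2 ≤ alast →
    (a₁ :: (mid ++ [alast])).countP (fun x => x % 2 = 1) = 2 ∧ Odd alast →
    ((a₁ : R) + 1) * ((alast / 2 : ℕ) : R) * N (a₁ :: (mid ++ [alast])) =
      (((a₁ + 1) / 2 : ℕ) : R) * (((alast - 1 : ℕ) : R) + 1) *
        N ((a₁ + 1) :: (mid ++ [alast - 1]))
  transfer_one : ∀ (a₁ : ℕ) (mid : List ℕ),
    (∀ x ∈ a₁ :: mid, 0 < x) →
    (a₁ :: (mid ++ [1])).countP (fun x => x % 2 = 1) = 2 →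
    ((a₁ : R) + 1) * N (a₁ :: (mid ++ [1])) =
      (((a₁ + 1) / 2 : ℕ) : R) * (Vv ((a₁ + 1) :: mid) : R) * N ((a₁ + 1) :: mid)

namespace SlicingsRecurrence

theorem map {R S : Type*} [Semiring R] [Semiring S] {N : List ℕ → R}
    (hN : SlicingsRecurrence N) (f : R →+* S) : SlicingsRecurrence (f ∘ N) where
  init r hr := by simpa [map_ofNat] using congrArg f (hN.init r hr)
  perm a b ha hab := congrArg f (hN.perm a b ha hab)
  grow a₁ rest hpos heven := by
    simpa [map_ofNat] using congrArg f (hN.grow a₁ rest hpos heven)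
  transfer a₁ alast mid hpos hlast hodd := by
    simpa using congrArg f (hN.transfer a₁ alast mid hpos hlast hodd)
  transfer_one a₁ mid hpos hodd := by simpa using congrArg f (hN.transfer_one a₁ mid hpos hodd)

variable {R : Type*} [Semiring R] [IsLeftCancelMulZero R] [CharZero R] {N M : List ℕ → R}
  {a mid : List ℕ} {x y : ℕ}

theorem eq_of_isBipartiteType (hN : SlicingsRecurrence N) (hM : SlicingsRecurrence M)
    (hne : a ≠ []) (ha : IsBipartiteType a) : N a = M a := by
  refine ha.perm_induction (P := fun a ↦ a ≠ [] → N a = M a) (fun r hr ↦ ?_)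
    (fun x l hl ih _ ↦ ?_) (fun a b ha hab ih hne ↦ ?_) hne
  · have hr : 1 ≤ r := by simpa [Nat.one_le_iff_ne_zero] using hr
    rw [hN.init r hr, hM.init r hr]
  · obtain ⟨⟨hxpos, hxeven⟩, hl'⟩ := List.forall_mem_cons.mp hl
    have hV := (IsBipartiteType.cons (by omega : 0 < x + 2) (by grind) hl').validType.Vv_pos
    have hhalf : (((x + 2) / 2 : ℕ) : R) ≠ 0 := Nat.cast_ne_zero.mpr (by omega)
    have hhalf' : (((x + 2 - 1) / 2 : ℕ) : R) ≠ 0 := Nat.cast_ne_zero.mpr (by omega)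
    refine mul_left_cancel₀ (mul_ne_zero (mul_ne_zero hhalf hhalf')
      (Nat.cast_ne_zero.mpr hV.ne')) ?_
    have hpos := fun z hz ↦ (hl z hz).1
    have heven := fun z hz ↦ (hl z hz).2
    rw [← hN.grow x l hpos heven, ← hM.grow x l hpos heven, ih (List.cons_ne_nil x l)]
  · rw [hN.perm a b ha.validType hab, hM.perm a b ha.validType hab,
      ih fun hb ↦ hne (hb ▸ hab).eq_nil]

theorem eq_of_odd_cons_append_odd (hN : SlicingsRecurrence N) (hM : SlicingsRecurrence M)
    (hx : Odd x) (hy : Odd y) (hmid : IsBipartiteType mid) :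
    N (x :: (mid ++ [y])) = M (x :: (mid ++ [y])) := by
  have hcount := countP_odd_cons_append_odd hx hy hmid
  have hmid_pos := hmid.validType.1
  have hx_succ : (x : R) + 1 ≠ 0 := x.cast_add_one_ne_zero
  obtain rfl | hy1 : y = 1 ∨ 2 ≤ y := by grind
  · have hpos : ∀ z ∈ x :: mid, 0 < z := List.forall_mem_cons.mpr ⟨hx.pos, hmid_pos⟩
    refine mul_left_cancel₀ hx_succ ?_
    rw [hN.transfer_one x mid hpos hcount, hM.transfer_one x mid hpos hcount,
      eq_of_isBipartiteType hN hM (List.cons_ne_nil _ _) (hmid.cons x.succ_pos hx.add_one)]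
  · have hpos : ∀ z ∈ x :: (mid ++ [y]), 0 < z := List.forall_mem_cons.mpr
      ⟨hx.pos, List.forall_mem_append.mpr ⟨hmid_pos, List.forall_mem_singleton.mpr hy.pos⟩⟩
    have hlast : IsBipartiteType [y - 1] := 
      List.forall_mem_singleton.mpr ⟨by omega, Nat.Odd.sub_odd hy odd_one⟩
    have hbip := (hmid.append hlast).cons x.succ_pos hx.add_one
    have hhalf : ((y / 2 : ℕ) : R) ≠ 0 := Nat.cast_ne_zero.mpr (by omega)
    refine mul_left_cancel₀ (mul_ne_zero hx_succ hhalf) ?_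
    rw [hN.transfer x y mid hpos hy1 ⟨hcount, hy⟩, hM.transfer x y mid hpos hy1 ⟨hcount, hy⟩,
      eq_of_isBipartiteType hN hM (List.cons_ne_nil _ _) hbip]

theorem eq_of_validType (hN : SlicingsRecurrence N) (hM : SlicingsRecurrence M)
    (hne : a ≠ []) (ha : ValidType a) : N a = M a := by
  have hpos := ha.1
  rcases ha.2 with hcount | hcount
  · exact eq_of_isBipartiteType hN hM hne (.of_countP_odd_eq_zero hpos hcount)
  · obtain ⟨x, y, mid, hx, hy, hmid, hperm⟩ := exists_perm_odd_cons_append_odd hpos hcount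
    rw [hN.perm a _ ha hperm, hM.perm a _ ha hperm, eq_of_odd_cons_append_odd hN hM hx hy hmid]

end SlicingsRecurrence

section Tutte

variable {a b : ℕ} {l : List ℕ}

theorem Tv_replicate_two (r : ℕ) :
    Tv (List.replicate (r + 1) 2) = 2 ^ r * (Nat.factorial r : ℚ) := by
  have hE : Ev (List.replicate (r + 1) 2) = r + 1 := by simp [Ev]
  have hV : Vv (List.replicate (r + 1) 2) = 2 := by simp [Vv, hE]
  have hα : alphaQ 2 = 2 := by simp [alphaQ]
  simp only [Tv, hE, hV, hα, List.map_replicate, List.prod_replicate, Nat.add_sub_cancel,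
    Nat.factorial_two]
  push_cast
  ring

theorem Tv_perm {a b : List ℕ} (hab : a.Perm b) : Tv a = Tv b := by
  simp only [Tv, Vv, Ev, hab.sum_eq, hab.length_eq, (hab.map alphaQ).prod_eq]

theorem Tv_grow (ha : ValidType (a :: l)) :
    ((a : ℚ) + 1) * ((a : ℚ) + 2) * (Ev (a :: l) : ℚ) * Tv (a :: l) =
      (((a + 2) / 2 : ℕ) : ℚ) * (((a + 2 - 1) / 2 : ℕ) : ℚ) *
        (Vv ((a + 2) :: l) : ℚ) * Tv ((a + 2) :: l) := by
  have hE : Ev ((a + 2) :: l) = Ev (a :: l) + 1 := by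
    simp only [Ev, List.sum_cons]
    omega
  have hV : Vv ((a + 2) :: l) = Vv (a :: l) + 1 := by
    have := ha.length_le_Ev_add_one
    simp only [Vv, hE, List.length_cons] at this ⊢
    omega
  have hE_pos : 0 < Ev (a :: l) := ha.Ev_pos (List.cons_ne_nil a l)
  have hfact : ((Ev (a :: l)).factorial : ℚ) = Ev (a :: l) * (Ev (a :: l) - 1).factorial :=
    mod_cast (Nat.mul_factorial_pred hE_pos.ne').symm
  simp only [Tv, hE, hV, Nat.add_sub_cancel, List.map_cons, List.prod_cons, hfact,
    Nat.factorial_succ (Vv (a :: l))]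
  push_cast
  field_simp
  linear_combination -(l.map alphaQ).prod * alphaQ_add_two_mul (ha.1 a List.mem_cons_self)

theorem Tv_transfer (ha : 0 < a) (hb : 2 ≤ b) :
    ((a : ℚ) + 1) * ((b / 2 : ℕ) : ℚ) * Tv (a :: (l ++ [b])) =
      (((a + 1) / 2 : ℕ) : ℚ) * (((b - 1 : ℕ) : ℚ) + 1) * Tv ((a + 1) :: (l ++ [b - 1])) := by
  obtain ⟨c, rfl⟩ := Nat.exists_eq_add_of_le' (show 1 ≤ b by omega)
  have hE : Ev ((a + 1) :: (l ++ [c])) = Ev (a :: (l ++ [c + 1])) := by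
    simp only [Ev, List.sum_cons, List.sum_append, List.sum_nil]
    congr 1
    omega
  have hV : Vv ((a + 1) :: (l ++ [c])) = Vv (a :: (l ++ [c + 1])) := by
    simp only [Vv, hE, List.length_cons, List.length_append]
  simp only [Nat.add_sub_cancel, Tv, hE, hV, List.map_cons, List.map_append, List.prod_cons,
    List.prod_append, List.map_nil, List.prod_nil]
  set F : ℚ := (Ev (a :: (l ++ [c + 1])) - 1).factorial / (Vv (a :: (l ++ [c + 1]))).factorial
  linear_combination F * (l.map alphaQ).prod *
    (((a : ℚ) + 1) * alphaQ a * alphaQ_succ_mul (show 0 < c by omega)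
      - ((c : ℚ) + 1) * alphaQ c * alphaQ_succ_mul ha)

theorem Tv_transfer_one (ha : ValidType (a :: (l ++ [1]))) :
    ((a : ℚ) + 1) * Tv (a :: (l ++ [1])) =
      (((a + 1) / 2 : ℕ) : ℚ) * (Vv ((a + 1) :: l) : ℚ) * Tv ((a + 1) :: l) := by
  have hE : Ev ((a + 1) :: l) = Ev (a :: (l ++ [1])) := by
    simp only [Ev, List.sum_cons, List.sum_append, List.sum_nil]
    congr 1
    omega
  have hV : Vv ((a + 1) :: l) = Vv (a :: (l ++ [1])) + 1 := by
    have := ha.length_le_Ev_add_one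
    simp only [Vv, hE, List.length_cons, List.length_append, List.length_nil] at this ⊢
    omega
  have hα : alphaQ 1 = 1 := by simp [alphaQ]
  simp only [Tv, hE, hV, List.map_cons, List.map_append, List.prod_cons, List.prod_append,
    List.map_nil, List.prod_nil, hα, Nat.factorial_succ (Vv (a :: (l ++ [1])))]
  push_cast
  field_simp
  linear_combination -(l.map alphaQ).prod * alphaQ_succ_mul (ha.1 a List.mem_cons_self)

theorem slicingsRecurrence_Tv : SlicingsRecurrence Tv where
  init r hr := by
    obtain ⟨k, rfl⟩ := Nat.exists_eq_add_of_le' hr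
    exact Tv_replicate_two k
  perm _ _ _ hab := Tv_perm hab
  grow _ _ hpos heven := Tv_grow (IsBipartiteType.validType fun x hx ↦ ⟨hpos x hx, heven x hx⟩)
  transfer _ _ _ hpos hlast _ := Tv_transfer (hpos _ List.mem_cons_self) hlast
  transfer_one a₁ mid hpos hodd := by
    refine Tv_transfer_one ⟨?_, .inr hodd⟩
    rw [← List.cons_append, List.forall_mem_append]
    exact ⟨hpos, by simp⟩

end Tutte

theorem stmt9_general {K : Type*} [DivisionRing K] [CharZero K] {N : List ℕ → K}
    (hN : SlicingsRecurrence N) {a : List ℕ} (hne : a ≠ []) (ha : ValidType a) : N a = Tv a :=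
  hN.eq_of_validType (slicingsRecurrence_Tv.map (Rat.castHom K)) hne ha

/-- Any function `N` on bipartite/quasibipartite types satisfying the initial
condition (i) on the tuples `(2,…,2)`, exchangeability (ii), and the three
recurrences (iii)–(v) of Propositions 1, 3 and 4 of the paper must coincide
with the Tutte slicings value `T`: these data uniquely determine the numbers
of bipartite and quasibipartite plane maps with prescribed face degrees. -/
theorem stmt9 (N : List ℕ → ℚ)
    (hinit : ∀ r : ℕ, 1 ≤ r →
      N (List.replicate r 2) = 2 ^ (r - 1) * (Nat.factorial (r - 1) : ℚ))
    (hperm : ∀ a b : List ℕ, ValidType a → a.Perm b → N a = N b)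
    (hgrow : ∀ (a₁ : ℕ) (rest : List ℕ),
      (∀ x ∈ a₁ :: rest, 0 < x) → (∀ x ∈ a₁ :: rest, Even x) →
      ((a₁ : ℚ) + 1) * ((a₁ : ℚ) + 2) * (Ev (a₁ :: rest) : ℚ) * N (a₁ :: rest) =
        (((a₁ + 2) / 2 : ℕ) : ℚ) * (((a₁ + 2 - 1) / 2 : ℕ) : ℚ) *
          (Vv ((a₁ + 2) :: rest) : ℚ) * N ((a₁ + 2) :: rest))
    (htransfer : ∀ (a₁ alast : ℕ) (mid : List ℕ),
      (∀ x ∈ a₁ :: (mid ++ [alast]), 0 < x) → 2 ≤ alast →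
      ((∀ x ∈ a₁ :: (mid ++ [alast]), Even x) ∨
        ((a₁ :: (mid ++ [alast])).countP (fun x => x % 2 = 1) = 2 ∧ Odd alast)) →
      ((a₁ : ℚ) + 1) * ((alast / 2 : ℕ) : ℚ) * N (a₁ :: (mid ++ [alast])) =
        (((a₁ + 1) / 2 : ℕ) : ℚ) * (((alast - 1 : ℕ) : ℚ) + 1) *
          N ((a₁ + 1) :: (mid ++ [alast - 1])))
    (htransfer1 : ∀ (a₁ : ℕ) (mid : List ℕ),
      (∀ x ∈ a₁ :: mid, 0 < x) →
      (a₁ :: (mid ++ [1])).countP (fun x => x % 2 = 1) = 2 →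
      ((a₁ : ℚ) + 1) * N (a₁ :: (mid ++ [1])) =
        (((a₁ + 1) / 2 : ℕ) : ℚ) * (Vv ((a₁ + 1) :: mid) : ℚ) * N ((a₁ + 1) :: mid)) :
    ∀ a : List ℕ, a ≠ [] → ValidType a → N a = Tv a := by
  intro a hne ha
  simpa only [Rat.cast_id] using stmt9_general ⟨hinit, hperm, hgrow,
    fun a₁ alast mid hpos hlast hodd ↦ htransfer a₁ alast mid hpos hlast (.inr hodd),
    htransfer1⟩ hne ha
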